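/- Let (l,m,k) be an admissible triple with r = (l+m−k)/2. Then, as N → ∞, |√(([k+1]_{q(N)}·N^r)/θ_{q(N)}(k,l,m)) − 1| = O(N^{−1}). -/

import Mathlib

open scoped BigOperators
open Asymptotics Filter

/-- `q(N) = 2/(N + √(N²−4))`, so that `0 < q ≤ 1` and `q + q⁻¹ = N` for `N ≥ 2`. -/
noncomputable def qpar (N : ℕ) : ℝ := 2 / (N + Real.sqrt ((N : ℝ) ^ 2 - 4))

/-- The quantum integer `[n]_q = q^{n−1} + q^{n−3} + ⋯ + q^{−(n−1)}` (and `[0]_q = 0`). -/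
noncomputable def qint (N n : ℕ) : ℝ :=
  ∑ j ∈ Finset.range n, qpar N ^ ((n : ℤ) - 1 - 2 * (j : ℤ))

/-- The quantum factorial `[n]_q! = [n]_q·[n−1]_q·⋯·[1]_q`, with `[0]_q! = 1`. -/
noncomputable def qfact (N n : ℕ) : ℝ := ∏ i ∈ Finset.range n, qint N (i + 1)

/-- The theta-net `θ_q(k,l,m)` of an admissible triple, with `r = (l+m−k)/2`. -/
noncomputable def thetaNet (N k l m r : ℕ) : ℝ :=
  (qfact N r * qfact N (l - r) * qfact N (m - r) * qfact N (k + r + 1)) /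
    (qfact N l * qfact N m * qfact N k)

/-!
With `q + q⁻¹ = N`, the quantum integer `[n + 1]_q` is the value at `N` of the rescaled Chebyshev
polynomial of the second kind `S n`, which is monic of degree `n`. Hence `[n]_q!` is the value at
`N` of a monic polynomial of degree `n.choose 2`, and `[k + 1]_q * N ^ r / θ_q(k, l, m)` is a
quotient of two monic polynomials. Admissibility forces their degrees to agree, so the quotient is
`1 + O(N⁻¹)`, and `|√x - 1| ≤ |x - 1|` transfers the estimate to the square root.
-/

open Bornology Polynomial Polynomial.Chebyshev

section RationalFunctions

variable {𝕜 : Type*} [NormedField 𝕜] {P Q : 𝕜[X]}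

theorem isBigO_cobounded_eval_div_eval_sub_one (h : (P - Q).degree < Q.degree) :
    (fun x => P.eval x / Q.eval x - 1) =O[cobounded 𝕜] fun x => x⁻¹ := by
  have hQ : ∀ᶠ x in cobounded 𝕜, Q.eval x ≠ 0 :=
    Bornology.le_cofinite 𝕜 (eventually_cofinite_not_isRoot (ne_zero_of_degree_gt h))
  have hdeg : (X * (P - Q)).degree ≤ Q.degree := by
    rw [mul_comm, degree_mul_X]
    exact Nat.WithBot.add_one_le_of_lt h
  have hnum : (fun x => x * (P.eval x - Q.eval x)) =O[cobounded 𝕜] Q.eval := by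
    simpa using isBigO_cobounded_of_degree_le hdeg
  refine (((isBigO_mul_iff_isBigO_div (eventually_ne_cobounded 0)).1 hnum).mul
    (isBigO_refl (fun x => (Q.eval x)⁻¹) _)).congr' ?_ ?_
  · filter_upwards [hQ] with x hx
    field_simp
  · filter_upwards [hQ] with x hx
    field_simp

theorem isBigO_cobounded_eval_div_eval_sub_one_of_isMonicOfDegree {n : ℕ}
    (hP : IsMonicOfDegree P n) (hQ : IsMonicOfDegree Q n) :
    (fun x => P.eval x / Q.eval x - 1) =O[cobounded 𝕜] fun x => x⁻¹ := by
  refine isBigO_cobounded_eval_div_eval_sub_one (degree_sub_lt_right ?_ hQ.ne_zero ?_)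
  · rw [degree_eq_natDegree hP.ne_zero, degree_eq_natDegree hQ.ne_zero, hP.natDegree_eq,
      hQ.natDegree_eq]
  · rw [hP.leadingCoeff_eq, hQ.leadingCoeff_eq]

end RationalFunctions

theorem abs_sqrt_sub_one_le_abs_sub_one (x : ℝ) : |√x - 1| ≤ |x - 1| := by
  obtain hx | hx := le_total 0 x
  · calc |√x - 1| ≤ |√x - 1| * |√x + 1| :=
          le_mul_of_one_le_right (abs_nonneg _) (le_abs.2 (.inl (by simp)))
      _ = |x - 1| := by rw [← abs_mul, mul_comm, ← sq_sub_sq, Real.sq_sqrt hx, one_pow]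
  · rw [Real.sqrt_eq_zero_of_nonpos hx, zero_sub, abs_neg, abs_one, abs_sub_comm]
    exact le_abs.2 (.inl (by linarith))

section Chebyshev

theorem isMonicOfDegree_chebyshevS (R : Type*) [CommRing R] [Nontrivial R] (n : ℕ) :
    IsMonicOfDegree (S R n) n := by
  induction n using Nat.twoStepInduction with
  | zero => simp
  | one => simpa using isMonicOfDegree_X R
  | more n ih₀ ih₁ =>
    have hlead : IsMonicOfDegree (X * S R (n + 1 : ℕ)) (n + 2) := by
      simpa [add_comm, add_left_comm] using (isMonicOfDegree_X R).mul ih₁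
    have hlower : (S R n).natDegree < n + 2 := by
      rw [ih₀.natDegree_eq]
      lia
    simpa [S_add_two] using hlead.sub hlower

variable {K : Type*} [Field K] {q : K}

theorem add_inv_mul_sum_zpow (hq : q ≠ 0) (n : ℕ) :
    (q + q⁻¹) * ∑ j ∈ Finset.range (n + 2), q ^ ((n : ℤ) + 1 - 2 * j) =
      ∑ j ∈ Finset.range (n + 3), q ^ ((n : ℤ) + 2 - 2 * j) +
        ∑ j ∈ Finset.range (n + 1), q ^ ((n : ℤ) - 2 * j) := by
  have raise (j : ℕ) : q * q ^ ((n : ℤ) + 1 - 2 * j) = q ^ ((n : ℤ) + 2 - 2 * j) := by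
    rw [← zpow_one_add₀ hq]
    ring_nf
  have lower (j : ℕ) : q⁻¹ * q ^ ((n : ℤ) + 1 - 2 * j) = q ^ ((n : ℤ) - 2 * j) := by
    rw [← zpow_neg_one, ← zpow_add₀ hq]
    ring_nf
  have last : q ^ ((n : ℤ) + 2 - 2 * (n + 2 : ℕ)) = q ^ ((n : ℤ) - 2 * (n + 1 : ℕ)) := by
    push_cast
    ring_nf
  rw [add_mul, Finset.mul_sum, Finset.mul_sum]
  simp only [raise, lower]
  rw [Finset.sum_range_succ _ (n + 2), last,
    Finset.sum_range_succ (fun j : ℕ => q ^ ((n : ℤ) - 2 * j)) (n + 1)]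
  ring

theorem sum_zpow_eq_eval_chebyshevS (hq : q ≠ 0) (n : ℕ) :
    ∑ j ∈ Finset.range (n + 1), q ^ ((n : ℤ) - 2 * j) = (S K n).eval (q + q⁻¹) := by
  induction n using Nat.twoStepInduction with
  | zero => simp
  | one => simp [Finset.sum_range_succ]
  | more n ih₀ ih₁ =>
    push_cast at ih₁ ⊢
    rw [S_add_two, eval_sub, eval_mul, eval_X, ← ih₀, ← ih₁, add_inv_mul_sum_zpow hq,
      add_sub_cancel_right]

end Chebyshev

section QuantumIntegers

variable {N : ℕ}

theorem qpar_pos (hN : 0 < N) : 0 < qpar N := by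
  unfold qpar
  positivity

theorem qpar_add_inv (hN : 2 ≤ N) : qpar N + (qpar N)⁻¹ = N := by
  have hN' : (2 : ℝ) ≤ N := by exact_mod_cast hN
  have hsq : √((N : ℝ) ^ 2 - 4) ^ 2 = (N : ℝ) ^ 2 - 4 := Real.sq_sqrt (by nlinarith)
  rw [qpar, inv_div]
  field_simp
  linear_combination hsq

theorem qint_succ_eq_eval (hN : 2 ≤ N) (n : ℕ) : qint N (n + 1) = (S ℝ n).eval (N : ℝ) := by
  rw [← qpar_add_inv hN, ← sum_zpow_eq_eval_chebyshevS (qpar_pos (by lia)).ne', qint]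
  push_cast
  simp only [add_sub_cancel_right]

/-- The quantum factorial `[n]_q!` as a polynomial in `q + q⁻¹`. -/
noncomputable def qfactPoly (R : Type*) [CommRing R] (n : ℕ) : R[X] :=
  ∏ i ∈ Finset.range n, S R i

theorem isMonicOfDegree_qfactPoly (R : Type*) [CommRing R] [Nontrivial R] (n : ℕ) :
    IsMonicOfDegree (qfactPoly R n) (n.choose 2) := by
  induction n with
  | zero => simp [qfactPoly]
  | succ n ih =>
    rw [qfactPoly, Finset.prod_range_succ, Nat.choose_succ_succ', Nat.choose_one_right, add_comm n]
    exact ih.mul (isMonicOfDegree_chebyshevS R n)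

theorem qfact_eq_eval (hN : 2 ≤ N) (n : ℕ) : qfact N n = (qfactPoly ℝ n).eval (N : ℝ) := by
  simp only [qfact, qfactPoly, eval_prod, qint_succ_eq_eval hN]

end QuantumIntegers

/-- The numerator of `[a + b + 1]_q * N ^ r / θ_q(a + b, r + a, r + b)`, as a polynomial in
`N = q + q⁻¹`. Every admissible triple has the form `(l, m, k) = (r + a, r + b, a + b)`. -/
noncomputable def thetaRatioNum (R : Type*) [CommRing R] (a b r : ℕ) : R[X] :=
  S R (a + b : ℕ) * X ^ r * (qfactPoly R (r + a) * qfactPoly R (r + b) * qfactPoly R (a + b))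

/-- The denominator of the quotient whose numerator is `thetaRatioNum`. -/
noncomputable def thetaRatioDen (R : Type*) [CommRing R] (a b r : ℕ) : R[X] :=
  qfactPoly R r * qfactPoly R a * qfactPoly R b * qfactPoly R (a + b + r + 1)

theorem qint_mul_pow_div_thetaNet_eq_eval_div_eval {N : ℕ} (hN : 2 ≤ N) (a b r : ℕ) :
    qint N (a + b + 1) * (N : ℝ) ^ r / thetaNet N (a + b) (r + a) (r + b) r =
      (thetaRatioNum ℝ a b r).eval (N : ℝ) / (thetaRatioDen ℝ a b r).eval (N : ℝ) := by
  simp only [thetaNet, thetaRatioNum, thetaRatioDen, qint_succ_eq_eval hN, qfact_eq_eval hN,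
    eval_mul, eval_pow, eval_X, add_tsub_cancel_left, div_div_eq_mul_div]

theorem isMonicOfDegree_thetaRatioDen (R : Type*) [CommRing R] [Nontrivial R] (a b r : ℕ) :
    IsMonicOfDegree (thetaRatioDen R a b r)
      (r.choose 2 + a.choose 2 + b.choose 2 + (a + b + r + 1).choose 2) :=
  (((isMonicOfDegree_qfactPoly R r).mul (isMonicOfDegree_qfactPoly R a)).mul
    (isMonicOfDegree_qfactPoly R b)).mul (isMonicOfDegree_qfactPoly R (a + b + r + 1))

theorem thetaRatio_degree_balance (a b r : ℕ) :
    a + b + r + ((r + a).choose 2 + (r + b).choose 2 + (a + b).choose 2) =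
      r.choose 2 + a.choose 2 + b.choose 2 + (a + b + r + 1).choose 2 := by
  qify
  simp only [Nat.cast_choose_two]
  push_cast
  ring

theorem isMonicOfDegree_thetaRatioNum (R : Type*) [CommRing R] [Nontrivial R] (a b r : ℕ) :
    IsMonicOfDegree (thetaRatioNum R a b r)
      (r.choose 2 + a.choose 2 + b.choose 2 + (a + b + r + 1).choose 2) := by
  rw [← thetaRatio_degree_balance]
  exact ((isMonicOfDegree_chebyshevS R (a + b)).mul (isMonicOfDegree_X_pow R r)).mul
    (((isMonicOfDegree_qfactPoly R (r + a)).mul (isMonicOfDegree_qfactPoly R (r + b))).mul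
      (isMonicOfDegree_qfactPoly R (a + b)))

theorem isBigO_qint_mul_pow_div_thetaNet_sub_one (a b r : ℕ) :
    (fun N : ℕ => qint N (a + b + 1) * (N : ℝ) ^ r / thetaNet N (a + b) (r + a) (r + b) r - 1)
      =O[atTop] fun N : ℕ => (N : ℝ)⁻¹ := by
  refine ((isBigO_cobounded_eval_div_eval_sub_one_of_isMonicOfDegree
    (isMonicOfDegree_thetaRatioNum ℝ a b r) (isMonicOfDegree_thetaRatioDen ℝ a b r)).comp_tendsto
    tendsto_natCast_atTop_cobounded).congr' ?_ .rfl
  filter_upwards [eventually_ge_atTop 2] with N hN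
  rw [qint_mul_pow_div_thetaNet_eq_eval_div_eval hN, Function.comp_apply]

/-- For an admissible triple `(l,m,k)` with `r = (l+m−k)/2`, as `N → ∞` one has
`|√(([k+1]_q·N^r)/θ_q(k,l,m)) − 1| = O(N^{−1})`. -/
theorem sqrt_ratio_sub_one_asymptotics (k l m r : ℕ)
    (hadm : l + m = k + 2 * r) (hrl : r ≤ l) (hrm : r ≤ m) :
    (fun N : ℕ =>
        |Real.sqrt ((qint N (k + 1) * (N : ℝ) ^ r) / thetaNet N k l m r) - 1|) =O[atTop]
      fun N : ℕ => (N : ℝ)⁻¹ := by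
  obtain ⟨a, rfl⟩ := Nat.exists_eq_add_of_le hrl
  obtain ⟨b, rfl⟩ := Nat.exists_eq_add_of_le hrm
  obtain rfl : k = a + b := by lia
  have hsqrt : (fun N : ℕ =>
      |√(qint N (a + b + 1) * (N : ℝ) ^ r / thetaNet N (a + b) (r + a) (r + b) r) - 1|) =O[atTop]
      fun N : ℕ => qint N (a + b + 1) * (N : ℝ) ^ r / thetaNet N (a + b) (r + a) (r + b) r - 1 :=
    isBigO_of_le _ fun N => (norm_abs_eq_norm _).trans_le (abs_sqrt_sub_one_le_abs_sub_one _)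
  exact hsqrt.trans (isBigO_qint_mul_pow_div_thetaNet_sub_one a b r)
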